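/- arXiv:2103.07960 — 5 statements merged into one kernel-verified Lean document; each statement's English description precedes it below -/
import Mathlib

section
/- Every bounded parametrised scalar is realised by ZX phases: for every k : ℕ and every function s : (Fin n → ℝ) → ℂ such that ‖s θ‖ ≤ 2^k for all θ, there exist functions α, β : (Fin n → ℝ) → ℝ such that for all θ, s θ = 2^k * Complex.exp (Complex.I * α θ) * (1 + Complex.exp (Complex.I * β θ)) / 2. -/
/-- Every point of the closed unit disc is the midpoint of two points of the unit circle. -/
theorem Complex.exists_eq_exp_mul_one_add_exp_div_two {z : ℂ} (hz : ‖z‖ ≤ 1) :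
    ∃ a b : ℝ, z = Complex.exp (Complex.I * a) * (1 + Complex.exp (Complex.I * b)) / 2 := by
  set γ : ℝ := Real.arccos ‖z‖
  have hcos : ((‖z‖ : ℝ) : ℂ) = Complex.cos γ := by
    rw [← Complex.ofReal_cos, Real.cos_arccos (by linarith [norm_nonneg z]) hz]
  refine ⟨z.arg - γ, 2 * γ, ?_⟩
  calc z = Complex.cos γ * Complex.exp (z.arg * Complex.I) := by
        rw [← hcos, Complex.norm_mul_exp_arg_mul_I]
    _ = (Complex.exp (z.arg * Complex.I + γ * Complex.I) +
          Complex.exp (z.arg * Complex.I + -γ * Complex.I)) / 2 := by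
        rw [Complex.cos, Complex.exp_add, Complex.exp_add]
        ring
    _ = _ := by
        rw [mul_add, mul_one, ← Complex.exp_add, add_comm]
        push_cast
        ring_nf

/-- Every parametrised scalar `s : ℝⁿ → ℂ` bounded by `2^k` can be realised by ZX phases:
there are phase functions `α, β : ℝⁿ → ℝ` with
`s θ = 2^k · e^{iα(θ)} · (1 + e^{iβ(θ)}) / 2` for all `θ`. -/
theorem bounded_scalar_zx_phases {n : ℕ} (k : ℕ) (s : (Fin n → ℝ) → ℂ)
    (hs : ∀ θ : Fin n → ℝ, ‖s θ‖ ≤ 2 ^ k) :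
    ∃ α β : (Fin n → ℝ) → ℝ, ∀ θ : Fin n → ℝ,
      s θ = 2 ^ k * Complex.exp (Complex.I * α θ) *
        (1 + Complex.exp (Complex.I * β θ)) / 2 := by
  have hdisc (θ : Fin n → ℝ) : ‖s θ / 2 ^ k‖ ≤ 1 := by
    rw [norm_div, norm_pow, Complex.norm_two]
    exact div_le_one_of_le₀ (hs θ) (by positivity)
  choose α β h using fun θ => Complex.exists_eq_exp_mul_one_add_exp_div_two (hdisc θ)
  refine ⟨α, β, fun θ => ?_⟩
  rw [mul_assoc, mul_div_assoc, ← h θ, mul_div_cancel₀ _ (pow_ne_zero k two_ne_zero)]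
end

section
/- Gradient of a spider: let α : ℝ → ℝ be differentiable at θ, and let A, B : Matrix m n ℂ be fixed matrices (m, n finite types). Then the function f(t) = exp(-I·α(t)/2) • A + exp(I·α(t)/2) • B has derivative at θ equal to (deriv α θ / 2) • (exp(-I·(α(θ)+π)/2) • A + exp(I·(α(θ)+π)/2) • B). -/
open Complex Matrix

/-- Shifting the phase `a` by `π` multiplies `e^{ia/2}` by `i`. -/
lemma exp_I_mul_add_pi_div_two (a : ℝ) :
    Complex.exp (Complex.I * ((a + Real.pi : ℝ) : ℂ) / 2) =
      Complex.I * Complex.exp (Complex.I * (a : ℂ) / 2) := by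
  have h : Complex.I * ((a + Real.pi : ℝ) : ℂ) / 2 =
      Real.pi / 2 * Complex.I + Complex.I * (a : ℂ) / 2 := by
    push_cast
    ring
  rw [h, Complex.exp_add, Complex.exp_pi_div_two_mul_I]

/-- Shifting the phase `a` by `π` multiplies `e^{-ia/2}` by `-i`. -/
lemma exp_neg_I_mul_add_pi_div_two (a : ℝ) :
    Complex.exp (-(Complex.I * ((a + Real.pi : ℝ) : ℂ)) / 2) =
      -Complex.I * Complex.exp (-(Complex.I * (a : ℂ)) / 2) := by
  rw [← Complex.exp_neg_pi_div_two_mul_I, ← Complex.exp_add]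
  congr 1
  push_cast
  ring

/-- Gradient of a spider: for fixed matrices `A B : Matrix m n ℂ` and a phase `α : ℝ → ℝ`
differentiable at `θ`, the function `f t = e^{-iα(t)/2} • A + e^{iα(t)/2} • B` has
derivative at `θ` equal to
`(deriv α θ / 2) • (e^{-i(α(θ)+π)/2} • A + e^{i(α(θ)+π)/2} • B)`
(derivatives of matrix-valued functions are taken entrywise). -/
theorem deriv_spider {m n : Type*} [Fintype m] [Fintype n]
    (α : ℝ → ℝ) (θ : ℝ) (hα : DifferentiableAt ℝ α θ) (A B : Matrix m n ℂ) :
    ∀ i j, HasDerivAt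
      (fun t : ℝ => (Complex.exp (-(Complex.I * (α t : ℂ)) / 2) • A +
        Complex.exp (Complex.I * (α t : ℂ) / 2) • B) i j)
      ((((deriv α θ / 2 : ℝ) : ℂ) •
        (Complex.exp (-(Complex.I * ((α θ + Real.pi : ℝ) : ℂ)) / 2) • A +
          Complex.exp (Complex.I * ((α θ + Real.pi : ℝ) : ℂ) / 2) • B)) i j) θ := by
  intro i j
  have hαc : HasDerivAt (fun t : ℝ => (α t : ℂ)) ((deriv α θ : ℝ) : ℂ) θ :=
    hα.hasDerivAt.ofReal_comp
  have hA := (((hαc.const_mul Complex.I).neg.div_const 2).cexp).mul_const (A i j)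
  have hB := (((hαc.const_mul Complex.I).div_const 2).cexp).mul_const (B i j)
  rw [exp_I_mul_add_pi_div_two, exp_neg_I_mul_add_pi_div_two]
  refine (hA.add hB).congr_deriv ?_
  simp only [Matrix.smul_apply, Matrix.add_apply, smul_eq_mul, Pi.neg_apply]
  push_cast
  ring
end

section
/- Differential characterisation of unitary groups: let U : ℝ → Matrix n n ℂ (n a finite type) be differentiable with continuous derivative and U 0 = 1. Then the following are equivalent: (i) U (s + t) = U s * U t for all s, t and (U t)ᴴ * U t = 1 for all t; (ii) there exists a constant self-adjoint matrix H (Hᴴ = H) such that deriv U t = (I • H) * U t for all t : ℝ. -/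
open Complex Matrix

/-- `A` has entrywise derivative `A'` at `t`. -/
def HasEntrywiseDerivAt {m n : Type*} (A : ℝ → Matrix m n ℂ) (A' : Matrix m n ℂ) (t : ℝ) : Prop :=
  ∀ i j, HasDerivAt (fun s => A s i j) (A' i j) t

namespace HasEntrywiseDerivAt

variable {l m n : Type*} {A : ℝ → Matrix l m ℂ} {A' : Matrix l m ℂ} {t : ℝ}

theorem mul [Fintype m] {B : ℝ → Matrix m n ℂ} {B' : Matrix m n ℂ}
    (hA : HasEntrywiseDerivAt A A' t) (hB : HasEntrywiseDerivAt B B' t) :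
    HasEntrywiseDerivAt (fun s => A s * B s) (A' * B t + A t * B') t := by
  intro i j
  simp only [Matrix.mul_apply, Matrix.add_apply, ← Finset.sum_add_distrib]
  exact HasDerivAt.fun_sum fun k _ => (hA i k).mul (hB k j)

theorem conjTranspose (hA : HasEntrywiseDerivAt A A' t) :
    HasEntrywiseDerivAt (fun s => (A s)ᴴ) A'ᴴ t :=
  fun i j => (hA j i).star

theorem const (C : Matrix l m ℂ) (t : ℝ) : HasEntrywiseDerivAt (fun _ => C) 0 t :=
  fun i j => hasDerivAt_const t (C i j)

theorem comp_add_const (s : ℝ) (hA : HasEntrywiseDerivAt A A' (t + s)) :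
    HasEntrywiseDerivAt (fun r => A (r + s)) A' t :=
  fun i j => HasDerivAt.comp_add_const t s (hA i j)

theorem unique {A'' : Matrix l m ℂ} (h₁ : HasEntrywiseDerivAt A A' t)
    (h₂ : HasEntrywiseDerivAt A A'' t) : A' = A'' :=
  Matrix.ext fun i j => (h₁ i j).unique (h₂ i j)

theorem eq_of_forall_zero (hA : ∀ t, HasEntrywiseDerivAt A 0 t) (s t : ℝ) : A s = A t :=
  Matrix.ext fun i j => is_const_of_deriv_eq_zero
    (fun r => (hA r i j).differentiableAt) (fun r => (hA r i j).deriv) s t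

/-- Two solutions of `X' = (i • H) * X` with `H` self-adjoint have constant Gram product. -/
theorem conjTranspose_mul_eq [Fintype l] {H : Matrix l l ℂ} (hH : Hᴴ = H)
    {V : ℝ → Matrix l m ℂ} {W : ℝ → Matrix l n ℂ}
    (hV : ∀ t, HasEntrywiseDerivAt V ((Complex.I • H) * V t) t)
    (hW : ∀ t, HasEntrywiseDerivAt W ((Complex.I • H) * W t) t) (s t : ℝ) :
    (V s)ᴴ * W s = (V t)ᴴ * W t := by
  refine eq_of_forall_zero (A := fun r => (V r)ᴴ * W r) (fun r => ?_) s t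
  have h := (hV r).conjTranspose.mul (hW r)
  simpa [Matrix.conjTranspose_mul, Matrix.conjTranspose_smul, hH, Matrix.mul_assoc] using h

end HasEntrywiseDerivAt

/-- Differential characterisation of one-parameter unitary groups: a continuously
differentiable `U : ℝ → Matrix n n ℂ` with `U 0 = 1` and entrywise derivative `U'`
is a one-parameter unitary group if and only if `U' t = (i • H) * U t` for some constant
self-adjoint matrix `H`. -/
theorem unitary_group_iff_deriv {n : Type*} [Fintype n] [DecidableEq n]
    (U U' : ℝ → Matrix n n ℂ) (hU0 : U 0 = 1)
    (hderiv : ∀ (t : ℝ) (i j : n), HasDerivAt (fun s => U s i j) (U' t i j) t)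
    (hcont : ∀ i j : n, Continuous fun t => U' t i j) :
    ((∀ s t : ℝ, U (s + t) = U s * U t) ∧ (∀ t : ℝ, (U t)ᴴ * U t = 1)) ↔
      ∃ H : Matrix n n ℂ, Hᴴ = H ∧ ∀ t : ℝ, U' t = (Complex.I • H) * U t := by
  have hd : ∀ t, HasEntrywiseDerivAt U (U' t) t := hderiv
  constructor
  · rintro ⟨hmul, hunit⟩
    have hskew : (U' 0)ᴴ + U' 0 = 0 := by
      have h := (hd 0).conjTranspose.mul (hd 0)
      simp only [hunit, hU0, Matrix.conjTranspose_one, Matrix.mul_one, Matrix.one_mul] at h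
      exact h.unique (.const 1 0)
    refine ⟨-Complex.I • U' 0, ?_, fun t => ?_⟩
    · simp [Matrix.conjTranspose_smul, eq_neg_of_add_eq_zero_left hskew]
    · have hshift : HasEntrywiseDerivAt (fun r => U (r + t)) (U' t) 0 :=
        .comp_add_const t (by simpa using hd t)
      have h := (hd 0).mul (.const (U t) 0)
      simp only [← hmul, Matrix.mul_zero, add_zero] at h
      simpa [smul_smul] using hshift.unique h
  · rintro ⟨H, hH, hode⟩
    have hsol : ∀ t, HasEntrywiseDerivAt U ((Complex.I • H) * U t) t := fun t => hode t ▸ hd t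
    have hunit : ∀ t, (U t)ᴴ * U t = 1 := fun t => by
      simpa [hU0] using HasEntrywiseDerivAt.conjTranspose_mul_eq hH hsol hsol t 0
    refine ⟨fun s t => ?_, hunit⟩
    have h : (U s)ᴴ * U (s + t) = U t := by
      simpa [hU0] using HasEntrywiseDerivAt.conjTranspose_mul_eq hH hsol
        (fun r => (hsol (r + t)).comp_add_const t) s 0
    rw [← h, ← Matrix.mul_assoc, mul_eq_one_comm.mp (hunit s), Matrix.one_mul]
end

section
/- Parameter-shift rule for the doubled Z rotation: let R : ℝ → Matrix (Fin 2) (Fin 2) ℂ be R θ = diagonal matrix with entries exp(-I·θ/2) and exp(I·θ/2), and define F θ = ((R θ).map conj) ⊗ₖ (R θ). Then for every θ : ℝ, F has derivative at θ equal to (1/2 : ℂ) • (F (θ + π/2) - F (θ - π/2)). -/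
open Complex Matrix Kronecker

/-- The parameter-shift rule for the character `t ↦ e^{ict}` with frequency `c ∈ {0, 1, -1}`. -/
lemma hasDerivAt_exp_parameter_shift {c : ℂ} (hc : c = 0 ∨ c = 1 ∨ c = -1) (θ : ℝ) :
    HasDerivAt (fun t : ℝ => exp (c * (I * t)))
      (1 / 2 * (exp (c * (I * (θ + Real.pi / 2 : ℝ))) -
        exp (c * (I * (θ - Real.pi / 2 : ℝ))))) θ := by
  have hderiv : HasDerivAt (fun t : ℝ => exp (c * (I * t))) (exp (c * (I * θ)) * (c * I)) θ := by
    simpa using (((hasDerivAt_id θ).ofReal_comp.const_mul I).const_mul c).cexp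
  convert hderiv using 1
  have hplus : exp (Real.pi / 2 * I) = I := exp_pi_div_two_mul_I
  have hminus : exp (-(Real.pi / 2 * I)) = -I := by rw [exp_neg, hplus, inv_I]
  have hadd : c * (I * (θ + Real.pi / 2 : ℝ)) = c * (I * θ) + c * (Real.pi / 2 * I) := by
    push_cast; ring
  have hsub : c * (I * (θ - Real.pi / 2 : ℝ)) = c * (I * θ) + -c * (Real.pi / 2 * I) := by
    push_cast; ring
  rw [hadd, hsub, exp_add, exp_add]
  rcases hc with rfl | rfl | rfl
  · simp
  · simp only [neg_mul, one_mul, hplus, hminus]; ring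
  · simp only [neg_mul, one_mul, neg_neg, hplus, hminus]; ring

/-- The doubled Z rotation is diagonal, with entries `1, e^{iθ}, e^{-iθ}, 1`. -/
lemma conj_kronecker_zRotation (θ : ℝ) :
    ((diagonal ![exp (-(I * (θ : ℂ)) / 2), exp (I * (θ : ℂ) / 2)]).map (starRingEnd ℂ)) ⊗ₖ
        (diagonal ![exp (-(I * (θ : ℂ)) / 2), exp (I * (θ : ℂ) / 2)]) =
      diagonal fun p : Fin 2 × Fin 2 => exp (((p.2 : ℕ) - (p.1 : ℕ) : ℂ) * (I * θ)) := by
  rw [diagonal_map (map_zero _), diagonal_kronecker_diagonal]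
  congr 1
  have hconj_two : starRingEnd ℂ 2 = 2 := map_ofNat _ 2
  funext ⟨a, b⟩
  fin_cases a <;> fin_cases b <;>
    simp only [Fin.zero_eta, Fin.mk_one, cons_val_zero, cons_val_one,
      ← exp_conj, ← exp_add, map_div₀, map_neg, map_mul, conj_I, conj_ofReal, hconj_two] <;>
    congr 1 <;> norm_num <;> ring

/-- Parameter-shift rule for the doubled Z rotation: with
`R θ = diag(e^{-iθ/2}, e^{iθ/2})` and `F θ = conj(R θ) ⊗ₖ R θ`, the map `F` has entrywise
derivative at `θ` equal to `(1/2) • (F (θ + π/2) - F (θ - π/2))`. -/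
theorem z_rotation_parameter_shift
    (R : ℝ → Matrix (Fin 2) (Fin 2) ℂ)
    (hR : ∀ θ : ℝ, R θ = Matrix.diagonal
      ![Complex.exp (-(Complex.I * (θ : ℂ)) / 2), Complex.exp (Complex.I * (θ : ℂ) / 2)])
    (F : ℝ → Matrix (Fin 2 × Fin 2) (Fin 2 × Fin 2) ℂ)
    (hF : ∀ θ : ℝ, F θ = ((R θ).map (starRingEnd ℂ)) ⊗ₖ (R θ)) :
    ∀ (θ : ℝ) (i j : Fin 2 × Fin 2), HasDerivAt (fun t => F t i j)
      (((1 / 2 : ℂ) • (F (θ + Real.pi / 2) - F (θ - Real.pi / 2))) i j) θ := by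
  intro θ i j
  have hdiag (t : ℝ) : F t =
      diagonal fun p : Fin 2 × Fin 2 => exp (((p.2 : ℕ) - (p.1 : ℕ) : ℂ) * (I * t)) := by
    rw [hF, hR, conj_kronecker_zRotation]
  simp only [hdiag, Matrix.smul_apply, Matrix.sub_apply, smul_eq_mul]
  by_cases hij : i = j
  · subst hij
    simp only [diagonal_apply_eq]
    apply hasDerivAt_exp_parameter_shift
    obtain ⟨a, b⟩ := i
    fin_cases a <;> fin_cases b <;> simp
  · simpa [diagonal_apply_ne _ hij] using hasDerivAt_const θ (0 : ℂ)
end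

section
/- Doubling is faithful up to a global phase: for matrices f, g : Matrix m n ℂ (m, n finite types), (f.map conj) ⊗ₖ f = (g.map conj) ⊗ₖ g if and only if there exists z : ℂ with ‖z‖ = 1 such that f = z • g. -/
open Matrix Kronecker

/-- Doubling is faithful up to a global phase: two complex matrices have the same doubling
`conj(f) ⊗ₖ f = conj(g) ⊗ₖ g` if and only if they agree up to a unit-norm scalar. -/
theorem doubling_faithful_up_to_phase {m n : Type*} [Fintype m] [Fintype n]
    (f g : Matrix m n ℂ) :
    (f.map (starRingEnd ℂ)) ⊗ₖ f = (g.map (starRingEnd ℂ)) ⊗ₖ g ↔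
      ∃ z : ℂ, ‖z‖ = 1 ∧ f = z • g := by
  constructor
  · intro h
    have entry (a : m) (b : n) (c : m) (d : n) :
        starRingEnd ℂ (f a b) * f c d = starRingEnd ℂ (g a b) * g c d :=
      congrFun (congrFun h (a, c)) (b, d)
    have norm_entry (a : m) (b : n) : ‖f a b‖ = ‖g a b‖ := by
      have := congrArg norm (entry a b a b)
      simp only [norm_mul, RCLike.norm_conj] at this
      exact (mul_self_inj (norm_nonneg _) (norm_nonneg _)).1 this
    by_cases hf : ∃ a b, f a b ≠ 0
    · obtain ⟨a, b, hab⟩ := hf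
      have hconj : starRingEnd ℂ (f a b) ≠ 0 := (map_ne_zero _).2 hab
      refine ⟨starRingEnd ℂ (g a b) / starRingEnd ℂ (f a b), ?_, ?_⟩
      · rw [norm_div, RCLike.norm_conj, RCLike.norm_conj, ← norm_entry,
          div_self (norm_ne_zero_iff.2 hab)]
      · ext c d
        rw [Matrix.smul_apply, smul_eq_mul, div_mul_eq_mul_div, eq_div_iff hconj, ← entry,
          mul_comm]
    · push Not at hf
      refine ⟨1, norm_one, ?_⟩
      ext c d
      have hg : g c d = 0 := by rw [← norm_eq_zero, ← norm_entry, hf, norm_zero]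
      simp [hf, hg]
  · rintro ⟨z, hz, rfl⟩
    have hzz : starRingEnd ℂ z * z = 1 := by
      rw [RCLike.conj_mul, hz]
      simp
    ext ⟨a, c⟩ ⟨b, d⟩
    simp only [kroneckerMap_apply, map_apply, Matrix.smul_apply, smul_eq_mul, map_mul]
    rw [mul_mul_mul_comm, hzz, one_mul]
end
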